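/- arXiv:1803.04204 — 3 statements merged into one kernel-verified Lean document; each statement's English description precedes it below -/
import Mathlib

section
/- Consider the semiparametric contextual bandit problem under the environment and boundedness assumptions, where at each round t the learner samples a_t from a distribution π_t depending measurably on the history. Assume λ ≥ 4d·log(9T) + 8·log(4T/δ). Then for any δ ∈ (0,1), with probability at least 1 − δ, the orthogonalized estimator satisfies ‖θ̂_t − θ‖_{Γ_t} ≤ √λ + √(27d·log(1 + 2T/d) + 54·log(4T/δ)) simultaneously for all t ∈ [T]. -/
open MeasureTheory ProbabilityTheory Matrix Finset

lemma exp_sub_sq_le_one_add {s : ℝ} (hs : -(3 / 5) ≤ s) : Real.exp (s - s ^ 2) ≤ 1 + s := by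
  rcases le_or_gt 0 s with h | h
  · have h1 : 1 - (s - s ^ 2) ≤ Real.exp (-(s - s ^ 2)) := by
      linarith [Real.add_one_le_exp (-(s - s ^ 2))]
    have h2 : 0 < 1 - (s - s ^ 2) := by nlinarith [sq_nonneg (s - 1 / 2)]
    rw [← inv_inv (Real.exp (s - s ^ 2)), ← Real.exp_neg]
    refine (inv_anti₀ h2 h1).trans ?_
    rw [inv_le_iff_one_le_mul₀ h2]
    nlinarith [pow_nonneg h 3]
  · obtain ⟨x, rfl⟩ : ∃ x, s = -x := ⟨-s, by ring⟩
    have hx0 : 0 < x := by linarith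
    have hx1 : x ≤ 3 / 5 := by linarith
    have hy : 0 ≤ x + x ^ 2 := by positivity
    have h1 : 1 + (x + x ^ 2) + (x + x ^ 2) ^ 2 / 2 + (x + x ^ 2) ^ 3 / 6
        ≤ Real.exp (x + x ^ 2) := by
      have := Real.sum_le_exp_of_nonneg hy 4
      simpa [Finset.sum_range_succ, Nat.factorial] using this
    have h2 : (1 : ℝ) ≤ (1 - x) * Real.exp (x + x ^ 2) := by
      refine le_trans ?_ (mul_le_mul_of_nonneg_left h1 (by linarith))
      have h3 : x ≤ (1 - x) * ((1 + x) ^ 2 / 2 + x * (1 + x) ^ 3 / 6) := by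
        have hp : 0 ≤ x * (3 / 5 - x) := mul_nonneg hx0.le (by linarith)
        nlinarith [mul_nonneg hx0.le hp, mul_nonneg (sq_nonneg x) hp,
          mul_nonneg (mul_nonneg hx0.le (sq_nonneg x)) hp]
      nlinarith [mul_le_mul_of_nonneg_left h3 (sq_nonneg x)]
    have h4 : -x - (-x) ^ 2 = -(x + x ^ 2) := by ring
    rw [h4, Real.exp_neg, inv_le_iff_one_le_mul₀ (Real.exp_pos _)]
    linarith

lemma exp_div_sqrt_le_one_add {ζ u p : ℝ} (hζ : |ζ| ≤ 3) (hu : u ^ 2 ≤ 27) (hp : 0 ≤ p)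
    (hp' : p ≤ 2 / 7) :
    Real.exp ((2 * ζ * u + ζ ^ 2 * p - u ^ 2) / (1 + p) / 54) / √(1 + p) ≤ 1 + ζ * u / 27 := by
  have hζ2 : ζ ^ 2 ≤ 9 := by nlinarith [sq_abs ζ, abs_nonneg ζ]
  have h1p : 0 < 1 + p := by linarith
  have hsq : (ζ * u / 27) ^ 2 ≤ u ^ 2 / 81 := by
    nlinarith [mul_le_mul_of_nonneg_right hζ2 (sq_nonneg u)]
  have hs : -(3 / 5) ≤ ζ * u / 27 := by nlinarith [sq_nonneg (ζ * u / 27 - 3 / 5)]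
  refine le_trans ?_ (exp_sub_sq_le_one_add hs)
  have hroot : Real.exp (p / (1 + p) / 2) ≤ √(1 + p) := by
    refine Real.le_sqrt_of_sq_le ?_
    rw [← Real.exp_nat_mul, ← Real.le_log_iff_exp_le h1p]
    have := Real.one_sub_inv_le_log_of_pos h1p
    refine le_trans (le_of_eq ?_) this
    push_cast
    field_simp
    ring
  refine (div_le_div_of_nonneg_left (Real.exp_pos _).le (Real.exp_pos _) hroot).trans ?_
  rw [← Real.exp_sub, Real.exp_le_exp]
  have key : 2 * ζ * u + ζ ^ 2 * p - u ^ 2 - 27 * p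
      ≤ 54 * (1 + p) * (ζ * u / 27 - (ζ * u / 27) ^ 2) := by
    have ha : -(2 * ζ * u * p) ≤ 6 * |u| * p := by
      have : -(ζ * u) ≤ 3 * |u| := by
        have := neg_abs_le (ζ * u)
        rw [abs_mul] at this
        nlinarith [abs_nonneg u]
      nlinarith
    have hb : 54 * (1 + p) * (ζ * u / 27) ^ 2 ≤ 2 / 3 * (1 + p) * u ^ 2 := by
      nlinarith [mul_le_mul_of_nonneg_left hsq h1p.le]
    have hc : ζ ^ 2 * p ≤ 9 * p := mul_le_mul_of_nonneg_right hζ2 hp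
    have hd : 0 ≤ (1 / 3 - 2 / 3 * p) * |u| ^ 2 - 6 * |u| * p + 18 * p := by
      nlinarith [mul_nonneg hp (sq_nonneg (|u| - 6)),
        mul_nonneg (sub_nonneg.2 hp') (sq_nonneg |u|)]
    rw [sq_abs] at hd
    nlinarith
  have e : (2 * ζ * u + ζ ^ 2 * p - u ^ 2) / (1 + p) / 54 - p / (1 + p) / 2
      = (2 * ζ * u + ζ ^ 2 * p - u ^ 2 - 27 * p) / (54 * (1 + p)) := by
    field_simp
    ring
  rw [e, div_le_iff₀ (by positivity)]
  linarith

/-- Quadratic form of the inverse after a rank-one update, in terms of the quantities before. -/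
lemma dotProduct_inv_mulVec_rankOne_update {n : Type*} [Fintype n] [DecidableEq n]
    {Γ : Matrix n n ℝ} (hsymm : Γ.IsHermitian) (hdet : IsUnit Γ.det) (w S : n → ℝ) (ζ : ℝ)
    (hp : 1 + w ⬝ᵥ Γ⁻¹ *ᵥ w ≠ 0) (hdet' : IsUnit (Γ + vecMulVec w w).det) :
    (S + ζ • w) ⬝ᵥ (Γ + vecMulVec w w)⁻¹ *ᵥ (S + ζ • w) = S ⬝ᵥ Γ⁻¹ *ᵥ S +
      (2 * ζ * (w ⬝ᵥ Γ⁻¹ *ᵥ S) + ζ ^ 2 * (w ⬝ᵥ Γ⁻¹ *ᵥ w) - (w ⬝ᵥ Γ⁻¹ *ᵥ S) ^ 2) /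
        (1 + w ⬝ᵥ Γ⁻¹ *ᵥ w) := by
  set p := w ⬝ᵥ Γ⁻¹ *ᵥ w with hpdef
  set u := w ⬝ᵥ Γ⁻¹ *ᵥ S with hudef
  have hsw : S ⬝ᵥ Γ⁻¹ *ᵥ w = u := by
    have ht : (Γ⁻¹)ᵀ = Γ⁻¹ := by
      have := hsymm.inv
      rwa [IsHermitian, conjTranspose_eq_transpose_of_trivial] at this
    rw [dotProduct_mulVec, ← mulVec_transpose, ht, dotProduct_comm]
  have hsol : (Γ + vecMulVec w w)⁻¹ *ᵥ (S + ζ • w)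
      = Γ⁻¹ *ᵥ S + ((ζ - u) / (1 + p)) • Γ⁻¹ *ᵥ w := by
    have : S + ζ • w = (Γ + vecMulVec w w) *ᵥ
        (Γ⁻¹ *ᵥ S + ((ζ - u) / (1 + p)) • Γ⁻¹ *ᵥ w) := by
      have hinv (x : n → ℝ) : Γ *ᵥ Γ⁻¹ *ᵥ x = x := by
        rw [mulVec_mulVec, mul_nonsing_inv _ hdet, one_mulVec]
      rw [mulVec_add, mulVec_smul, add_mulVec, add_mulVec, hinv, hinv, vecMulVec_mulVec,
        vecMulVec_mulVec, ← hpdef, ← hudef]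
      ext i
      simp
      field_simp
      ring
    rw [this, mulVec_mulVec, nonsing_inv_mul _ hdet', one_mulVec]
  rw [hsol]
  simp only [add_dotProduct, dotProduct_add, smul_dotProduct, dotProduct_smul, hsw, ← hpdef,
    ← hudef, smul_eq_mul]
  field_simp
  ring

lemma det_add_vecMulVec_self {n : Type*} [Fintype n] [DecidableEq n]
    {Γ : Matrix n n ℝ} (hdet : IsUnit Γ.det) (w : n → ℝ) :
    (Γ + vecMulVec w w).det = Γ.det * (1 + w ⬝ᵥ Γ⁻¹ *ᵥ w) := by
  rw [vecMulVec_eq Unit, det_add_replicateCol_mul_replicateRow hdet]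
  rw [det_unique (1 + replicateRow Unit w * Γ⁻¹ * replicateCol Unit w), Matrix.add_apply,
    Matrix.one_apply_eq, Matrix.mul_assoc, ← replicateCol_mulVec,
    replicateRow_mul_replicateCol_apply]

lemma dotProduct_sq_le {n : Type*} [Fintype n] (x y : n → ℝ) :
    (x ⬝ᵥ y) ^ 2 ≤ (x ⬝ᵥ x) * (y ⬝ᵥ y) := by
  simpa [dotProduct, sq] using Finset.sum_mul_sq_le_sq_mul_sq Finset.univ x y

/-- Arithmetic-geometric mean inequality for the eigenvalues. -/
lemma Matrix.PosDef.det_le_trace_div_pow {n : Type*} [Fintype n] [DecidableEq n] [Nonempty n]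
    {Γ : Matrix n n ℝ} (h : Γ.PosDef) :
    Γ.det ≤ (Γ.trace / Fintype.card n) ^ Fintype.card n := by
  have hev : ∀ i ∈ Finset.univ, 0 ≤ h.1.eigenvalues i := fun i _ => (h.eigenvalues_pos i).le
  have hc : (0 : ℝ) < Fintype.card n := by exact_mod_cast Fintype.card_pos
  have := Real.geom_mean_le_arith_mean Finset.univ (fun _ => (1 : ℝ)) h.1.eigenvalues
    (fun _ _ => zero_le_one) (by simpa using hc) hev
  simp only [Real.rpow_one, one_mul, sum_const, card_univ, nsmul_eq_mul, mul_one] at this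
  rw [h.1.det_eq_prod_eigenvalues, h.1.trace_eq_sum_eigenvalues]
  simp only [RCLike.ofReal_real_eq_id, id]
  calc _ = ((∏ i, h.1.eigenvalues i) ^ (Fintype.card n : ℝ)⁻¹) ^ Fintype.card n := by
        rw [Real.rpow_inv_natCast_pow (Finset.prod_nonneg hev) Fintype.card_ne_zero]
    _ ≤ _ := pow_le_pow_left₀ (Real.rpow_nonneg (Finset.prod_nonneg hev) _) this _

lemma Matrix.PosDef.mul_dotProduct_inv_mulVec_le {n : Type*} [Fintype n] [DecidableEq n]
    {Γ : Matrix n n ℝ} (h : Γ.PosDef) {lam : ℝ}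
    (hlow : ∀ x, lam * (x ⬝ᵥ x) ≤ x ⬝ᵥ Γ *ᵥ x) (w : n → ℝ) :
    lam * (Γ⁻¹ *ᵥ w ⬝ᵥ Γ⁻¹ *ᵥ w) ≤ w ⬝ᵥ Γ⁻¹ *ᵥ w := by
  have hdet : IsUnit Γ.det := h.det_pos.ne'.isUnit
  have := hlow (Γ⁻¹ *ᵥ w)
  rwa [mulVec_mulVec w Γ, mul_nonsing_inv _ hdet, one_mulVec, dotProduct_comm _ w] at this

lemma Matrix.PosDef.dotProduct_inv_mulVec_nonneg {n : Type*} [Fintype n] [DecidableEq n]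
    {Γ : Matrix n n ℝ} (h : Γ.PosDef) (w : n → ℝ) : 0 ≤ w ⬝ᵥ Γ⁻¹ *ᵥ w := by
  simpa using h.inv.posSemidef.dotProduct_mulVec_nonneg w

lemma Matrix.PosDef.dotProduct_inv_mulVec_le_div {n : Type*} [Fintype n] [DecidableEq n]
    {Γ : Matrix n n ℝ} (h : Γ.PosDef) {lam : ℝ} (hlam : 0 < lam)
    (hlow : ∀ x, lam * (x ⬝ᵥ x) ≤ x ⬝ᵥ Γ *ᵥ x) (w : n → ℝ) :
    w ⬝ᵥ Γ⁻¹ *ᵥ w ≤ (w ⬝ᵥ w) / lam := by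
  have h1 := h.mul_dotProduct_inv_mulVec_le hlow w
  have h2 := h.dotProduct_inv_mulVec_nonneg w
  have h3 := dotProduct_sq_le w (Γ⁻¹ *ᵥ w)
  have h4 : 0 ≤ w ⬝ᵥ w := by simpa using dotProduct_star_self_nonneg w
  rw [le_div_iff₀ hlam]
  rcases h2.eq_or_lt with h5 | h5
  · rw [← h5]; simpa using h4
  · nlinarith [mul_le_mul_of_nonneg_left h1 h4, mul_le_mul_of_nonneg_left h3 hlam.le]

/-- Triangle inequality for the seminorm of a positive semidefinite matrix. -/
lemma Matrix.PosSemidef.sqrt_dotProduct_mulVec_sub_le {n : Type*} [Fintype n]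
    {P : Matrix n n ℝ} (h : P.PosSemidef) (x y : n → ℝ) :
    √((x - y) ⬝ᵥ P *ᵥ (x - y)) ≤ √(x ⬝ᵥ P *ᵥ x) + √(y ⬝ᵥ P *ᵥ y) := by
  have hnn (v : n → ℝ) : 0 ≤ v ⬝ᵥ P *ᵥ v := by simpa using h.dotProduct_mulVec_nonneg v
  have hsymm : y ⬝ᵥ P *ᵥ x = x ⬝ᵥ P *ᵥ y := by
    have ht : Pᵀ = P := by
      have := h.1
      rwa [IsHermitian, conjTranspose_eq_transpose_of_trivial] at this
    rw [dotProduct_mulVec, ← mulVec_transpose, ht, dotProduct_comm]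
  have hquad (c : ℝ) : 0 ≤ (x ⬝ᵥ P *ᵥ x) * (c * c) + (2 * (x ⬝ᵥ P *ᵥ y)) * c
      + y ⬝ᵥ P *ᵥ y := by
    have := hnn (c • x + y)
    simp only [mulVec_add, mulVec_smul, add_dotProduct, dotProduct_add, smul_dotProduct,
      dotProduct_smul, smul_eq_mul, hsymm] at this
    linarith
  have hdisc := discrim_le_zero hquad
  rw [discrim] at hdisc
  have hcs : |x ⬝ᵥ P *ᵥ y| ≤ √(x ⬝ᵥ P *ᵥ x) * √(y ⬝ᵥ P *ᵥ y) := by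
    rw [← Real.sqrt_mul (hnn x)]
    exact Real.abs_le_sqrt (by linarith)
  rw [Real.sqrt_le_left (by positivity)]
  simp only [mulVec_sub, sub_dotProduct, dotProduct_sub, hsymm]
  have := neg_abs_le (x ⬝ᵥ P *ᵥ y)
  nlinarith [Real.sq_sqrt (hnn x), Real.sq_sqrt (hnn y)]

/-- The regularized Gram matrix `lam • 1 + ∑ τ < t, w τ (w τ)ᵀ`. -/
def regGram {d : ℕ} (lam : ℝ) (w : ℕ → Fin d → ℝ) (t : ℕ) : Matrix (Fin d) (Fin d) ℝ :=
  lam • (1 : Matrix (Fin d) (Fin d) ℝ) + ∑ τ ∈ Finset.range t, vecMulVec (w τ) (w τ)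

/-- The weighted sum `∑ τ < t, ζ τ • w τ`. -/
def weightedSum {d : ℕ} (ζ : ℕ → ℝ) (w : ℕ → Fin d → ℝ) (t : ℕ) : Fin d → ℝ :=
  ∑ τ ∈ Finset.range t, ζ τ • w τ

/-- The squared norm of the weighted sum in the inverse regularized Gram matrix. -/
noncomputable def selfNormSq {d : ℕ} (lam : ℝ) (ζ : ℕ → ℝ) (w : ℕ → Fin d → ℝ) (t : ℕ) : ℝ :=
  weightedSum ζ w t ⬝ᵥ (regGram lam w t)⁻¹ *ᵥ weightedSum ζ w t

/-- The exponential process whose decrease in expectation controls `selfNormSq`. -/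
noncomputable def expWeight {d : ℕ} (lam : ℝ) (ζ : ℕ → ℝ) (w : ℕ → Fin d → ℝ) (t : ℕ) : ℝ :=
  Real.exp (selfNormSq lam ζ w t / 54) / √((regGram lam w t).det / lam ^ d)

section Deterministic

variable {d : ℕ} {lam : ℝ} {ζ : ℕ → ℝ} {w : ℕ → Fin d → ℝ}

lemma regGram_succ (t : ℕ) :
    regGram lam w (t + 1) = regGram lam w t + vecMulVec (w t) (w t) := by
  rw [regGram, regGram, Finset.sum_range_succ, add_assoc]

lemma weightedSum_succ (t : ℕ) : weightedSum ζ w (t + 1) = weightedSum ζ w t + ζ t • w t := by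
  rw [weightedSum, weightedSum, Finset.sum_range_succ]

lemma regGram_posDef (hlam : 0 < lam) (t : ℕ) : (regGram lam w t).PosDef := by
  refine (Matrix.PosDef.one.smul hlam).add_posSemidef (Matrix.posSemidef_sum _ fun τ _ => ?_)
  simpa using Matrix.posSemidef_vecMulVec_self_star (w τ)

lemma mul_dotProduct_le_regGram (t : ℕ) (x : Fin d → ℝ) :
    lam * (x ⬝ᵥ x) ≤ x ⬝ᵥ regGram lam w t *ᵥ x := by
  have h : (∑ τ ∈ Finset.range t, vecMulVec (w τ) (w τ)).PosSemidef :=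
    Matrix.posSemidef_sum _ fun τ _ => by
      simpa using Matrix.posSemidef_vecMulVec_self_star (w τ)
  have := h.dotProduct_mulVec_nonneg x
  simp only [star_trivial] at this
  simp only [regGram, add_mulVec, dotProduct_add, smul_mulVec, one_mulVec, dotProduct_smul,
    smul_eq_mul]
  linarith

lemma pow_le_det_regGram (hlam : 0 < lam) (t : ℕ) : lam ^ d ≤ (regGram lam w t).det := by
  induction t with
  | zero => simp [regGram]
  | succ t ih =>
    rw [regGram_succ, det_add_vecMulVec_self (regGram_posDef hlam t).det_pos.ne'.isUnit]
    have := (regGram_posDef hlam t (w := w)).dotProduct_inv_mulVec_nonneg (w t)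
    nlinarith [pow_pos hlam d]

lemma det_regGram_div_le (hd : 0 < d) (hlam : 2 ≤ lam) (hw : ∀ τ, w τ ⬝ᵥ w τ ≤ 4) {t T : ℕ}
    (htT : t ≤ T) : (regGram lam w t).det / lam ^ d ≤ (1 + 2 * T / d) ^ d := by
  have hlam0 : 0 < lam := by linarith
  have : Nonempty (Fin d) := ⟨⟨0, hd⟩⟩
  have hd' : (0 : ℝ) < d := by exact_mod_cast hd
  have hdet := (regGram_posDef hlam0 t (w := w)).det_le_trace_div_pow
  have htr : (regGram lam w t).trace ≤ lam * d + 4 * T := by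
    simp only [regGram, trace_add, trace_smul, trace_one, Fintype.card_fin, smul_eq_mul,
      trace_sum, trace_vecMulVec]
    have : ∑ τ ∈ Finset.range t, w τ ⬝ᵥ w τ ≤ t • (4 : ℝ) := by
      simpa using Finset.sum_le_card_nsmul (Finset.range t) (fun τ => w τ ⬝ᵥ w τ) 4
        fun τ _ => hw τ
    have h2 : (t : ℝ) ≤ T := by exact_mod_cast htT
    rw [nsmul_eq_mul] at this
    linarith
  have htr0 : 0 ≤ (regGram lam w t).trace := (regGram_posDef hlam0 t).posSemidef.trace_nonneg
  rw [Fintype.card_fin] at hdet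
  rw [div_le_iff₀ (by positivity), ← mul_pow]
  refine hdet.trans (pow_le_pow_left₀ (by positivity) ?_ _)
  rw [div_le_iff₀ hd']
  have : (1 + 2 * (T : ℝ) / d) * lam * d = lam * d + 2 * T * lam := by field_simp
  rw [this]
  nlinarith [Nat.cast_nonneg (α := ℝ) T]

lemma selfNormSq_zero : selfNormSq lam ζ w 0 = 0 := by simp [selfNormSq, weightedSum]

lemma expWeight_zero (hlam : 0 < lam) : expWeight lam ζ w 0 = 1 := by
  simp [expWeight, selfNormSq_zero, regGram, hlam.ne']

lemma expWeight_nonneg (t : ℕ) : 0 ≤ expWeight lam ζ w t := by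
  unfold expWeight; positivity

lemma expWeight_le (hlam : 0 < lam) (t : ℕ) :
    expWeight lam ζ w t ≤ Real.exp (selfNormSq lam ζ w t / 54) := by
  refine div_le_self (Real.exp_pos _).le ?_
  rw [Real.one_le_sqrt, one_le_div (by positivity)]
  exact pow_le_det_regGram hlam t

lemma expWeight_succ_le (hlam : 14 ≤ lam) {t : ℕ} (hζ : |ζ t| ≤ 3) (hw : w t ⬝ᵥ w t ≤ 4)
    (hN : selfNormSq lam ζ w t ≤ 27 / 4 * lam) :
    expWeight lam ζ w (t + 1) ≤ expWeight lam ζ w t *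
      (1 + ζ t * (w t ⬝ᵥ (regGram lam w t)⁻¹ *ᵥ weightedSum ζ w t) / 27) := by
  have hlam0 : 0 < lam := by linarith
  have hpd := regGram_posDef hlam0 t (w := w)
  have hpd' := regGram_posDef hlam0 (t + 1) (w := w)
  have hlow := mul_dotProduct_le_regGram t (lam := lam) (w := w)
  set p := w t ⬝ᵥ (regGram lam w t)⁻¹ *ᵥ w t with hp
  set u := w t ⬝ᵥ (regGram lam w t)⁻¹ *ᵥ weightedSum ζ w t with hu
  have hp0 : 0 ≤ p := hpd.dotProduct_inv_mulVec_nonneg _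
  have hp1 : p ≤ 2 / 7 := by
    refine (hpd.dotProduct_inv_mulVec_le_div hlam0 hlow _).trans ?_
    rw [div_le_iff₀ hlam0]
    linarith
  have hu2 : u ^ 2 ≤ 27 := by
    have h1 := dotProduct_sq_le (w t) ((regGram lam w t)⁻¹ *ᵥ weightedSum ζ w t)
    have h2 := hpd.mul_dotProduct_inv_mulVec_le hlow (weightedSum ζ w t)
    rw [← hu] at h1
    set y2 := (regGram lam w t)⁻¹ *ᵥ weightedSum ζ w t ⬝ᵥ
      (regGram lam w t)⁻¹ *ᵥ weightedSum ζ w t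
    have h3 : 0 ≤ y2 := by
      simpa using dotProduct_star_self_nonneg ((regGram lam w t)⁻¹ *ᵥ weightedSum ζ w t)
    have h4 : y2 ≤ 27 / 4 := by
      have : lam * y2 ≤ lam * (27 / 4) := by
        rw [selfNormSq] at hN
        linarith
      exact le_of_mul_le_mul_left this hlam0
    nlinarith
  have hN' : selfNormSq lam ζ w (t + 1) = selfNormSq lam ζ w t +
      (2 * ζ t * u + ζ t ^ 2 * p - u ^ 2) / (1 + p) := by
    rw [selfNormSq, selfNormSq, weightedSum_succ, regGram_succ]
    refine dotProduct_inv_mulVec_rankOne_update hpd.1 hpd.det_pos.ne'.isUnit _ _ _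
      (by rw [← hp]; positivity) ?_
    rw [← regGram_succ]
    exact hpd'.det_pos.ne'.isUnit
  have hD : (regGram lam w (t + 1)).det / lam ^ d
      = (regGram lam w t).det / lam ^ d * (1 + p) := by
    rw [regGram_succ, det_add_vecMulVec_self hpd.det_pos.ne'.isUnit]
    ring
  have hdetpos : 0 ≤ (regGram lam w t).det / lam ^ d := by
    have := hpd.det_pos
    positivity
  rw [expWeight, expWeight, hN', hD, Real.sqrt_mul hdetpos, add_div, Real.exp_add,
    mul_div_mul_comm]
  exact mul_le_mul_of_nonneg_left (exp_div_sqrt_le_one_add hζ hu2 hp0 hp1) (by positivity)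

end Deterministic

section CondExp

variable {Ω : Type*} {m mΩ : MeasurableSpace Ω} {μ : Measure Ω} [IsProbabilityMeasure μ]

lemma integral_mul_eq_zero_of_condExp_eq_zero (hm : m ≤ mΩ) {k X : Ω → ℝ} (hk : Measurable[m] k)
    {C : ℝ} (hkC : ∀ ω, |k ω| ≤ C) (hX : Integrable X μ) (h0 : μ[X | m] =ᵐ[μ] 0) :
    Integrable (fun ω => k ω * X ω) μ ∧ ∫ ω, k ω * X ω ∂μ = 0 := by
  have hsm : StronglyMeasurable[m] k := hk.stronglyMeasurable
  have h := condExp_stronglyMeasurable_mul_of_bound hm hsm hX C (.of_forall hkC)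
  refine ⟨hX.bdd_mul (c := C) (hsm.mono hm).aestronglyMeasurable (.of_forall hkC), ?_⟩
  have h1 : k * μ[X | m] =ᵐ[μ] fun _ => (0 : ℝ) := by
    filter_upwards [h0] with ω hω
    simp [hω]
  change ∫ ω, (k * X) ω ∂μ = 0
  rw [← integral_condExp hm, integral_congr_ae (h.trans h1), integral_zero]

/-- If `X` is conditionally centered and conditionally independent of `a`, then it remains
conditionally centered after restriction to an event `{a = b}`. -/
lemma condExp_indicator_eq_zero_of_condIndepFun [StandardBorelSpace Ω] {A : Type*}
    [MeasurableSpace A] [MeasurableSingletonClass A] (hm : m ≤ mΩ) {a : Ω → A} {X : Ω → ℝ}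
    (ha : Measurable a) (hX : Measurable X) (hXi : Integrable X μ)
    (hind : CondIndepFun m hm a X μ) {b : A} {f : Ω → ℝ} (hf : Measurable[m] f)
    (hf0 : ∀ ω, 0 ≤ f ω) {C : ℝ} (hfC : ∀ ω, f ω ≤ C)
    (hlaw : μ⟦a ⁻¹' {b} | m⟧ =ᵐ[μ] f) (h0 : μ[X | m] =ᵐ[μ] 0) :
    μ[(a ⁻¹' {b}).indicator X | m] =ᵐ[μ] 0 := by
  have hfm : Measurable f := hf.mono hm le_rfl
  have hE : MeasurableSet (a ⁻¹' {b}) := ha (measurableSet_singleton b)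
  have hfabs (ω : Ω) : |f ω| ≤ C := by rw [abs_of_nonneg (hf0 ω)]; exact hfC ω
  have key (s : Set Ω) (hs : MeasurableSet[m] s) :
      ∫ ω in s, (a ⁻¹' {b}).indicator X ω ∂μ = 0 := by
    have hmap : (μ.restrict (s ∩ a ⁻¹' {b})).map X
        = ((μ.restrict s).withDensity fun ω => ENNReal.ofReal (f ω)).map X := by
      ext t ht
      have ht' : MeasurableSet (X ⁻¹' t) := hX ht
      rw [Measure.map_apply hX ht, Measure.map_apply hX ht, Measure.restrict_apply ht',
        withDensity_apply _ ht', Measure.restrict_restrict ht']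
      have h1 := (condIndepFun_iff_condExp_inter_preimage_eq_mul ha hX).1 hind {b} t
        (measurableSet_singleton b) ht
      have hti : Integrable ((X ⁻¹' t).indicator fun _ => (1 : ℝ)) μ :=
        (integrable_const 1).indicator ht'
      have h2 := condExp_stronglyMeasurable_mul_of_bound hm hf.stronglyMeasurable hti C
        (.of_forall hfabs)
      have h3 : μ⟦a ⁻¹' {b} ∩ X ⁻¹' t | m⟧
          =ᵐ[μ] μ[f * (X ⁻¹' t).indicator (fun _ => (1 : ℝ)) | m] := by
        filter_upwards [h1, h2, hlaw] with ω e1 e2 e3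
        rw [e1, e2, e3, Pi.mul_apply]
      have hprod : Integrable (f * (X ⁻¹' t).indicator (fun _ => (1 : ℝ))) μ :=
        hti.bdd_mul (c := C) hfm.aestronglyMeasurable (.of_forall hfabs)
      have h4 : ∫ ω in s, (a ⁻¹' {b} ∩ X ⁻¹' t).indicator (fun _ => (1 : ℝ)) ω ∂μ
          = ∫ ω in s, (f * (X ⁻¹' t).indicator (fun _ => (1 : ℝ))) ω ∂μ := by
        rw [← setIntegral_condExp hm ((integrable_const 1).indicator (hE.inter ht')) hs,
          ← setIntegral_condExp hm hprod hs]
        exact integral_congr_ae (ae_restrict_of_ae h3)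
      have h5 : (f * (X ⁻¹' t).indicator (fun _ => (1 : ℝ))) = (X ⁻¹' t).indicator f := by
        ext ω
        by_cases hω : ω ∈ X ⁻¹' t <;> simp [hω]
      rw [h5, integral_indicator ht', integral_indicator (hE.inter ht'),
        Measure.restrict_restrict ht', Measure.restrict_restrict (hE.inter ht')] at h4
      rw [← ofReal_integral_eq_lintegral_ofReal _ (.of_forall hf0), ← h4]
      · simp only [integral_const, smul_eq_mul, mul_one, measureReal_restrict_apply_univ]
        rw [ofReal_measureReal]
        congr 1
        ext ω
        simp only [Set.mem_inter_iff]
        tauto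
      · exact (Integrable.of_bound hfm.aestronglyMeasurable C (.of_forall hfabs))
    have h6 : ∫ ω in s ∩ a ⁻¹' {b}, X ω ∂μ = ∫ ω in s, f ω * X ω ∂μ := by
      have := congrArg (fun ν : Measure ℝ => ∫ x, x ∂ν) hmap
      rw [integral_map hX.aemeasurable (f := fun x => x) aestronglyMeasurable_id,
        integral_map hX.aemeasurable (f := fun x => x) aestronglyMeasurable_id,
        integral_withDensity_eq_integral_toReal_smul hfm.ennreal_ofReal
          (.of_forall fun _ => ENNReal.ofReal_lt_top)] at this
      simpa [ENNReal.toReal_ofReal (hf0 _)] using this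
    rw [integral_indicator hE, Measure.restrict_restrict hE, Set.inter_comm, h6]
    have h7 := condExp_stronglyMeasurable_mul_of_bound hm hf.stronglyMeasurable hXi C
      (.of_forall hfabs)
    have hfX : Integrable (f * X) μ :=
      hXi.bdd_mul (c := C) hfm.aestronglyMeasurable (.of_forall hfabs)
    change ∫ ω in s, (f * X) ω ∂μ = 0
    have h8 : f * μ[X | m] =ᵐ[μ] fun _ => (0 : ℝ) := by
      filter_upwards [h0] with ω hω
      simp [hω]
    rw [← setIntegral_condExp hm hfX hs,
      integral_congr_ae (ae_restrict_of_ae (h7.trans h8)), integral_zero]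
  refine (ae_eq_condExp_of_forall_setIntegral_eq hm (hXi.indicator hE)
    (fun s _ _ => (integrable_zero Ω ℝ μ).integrableOn) (fun s hs _ => ?_)
    stronglyMeasurable_zero.aestronglyMeasurable).symm
  rw [key s hs]
  simp

end CondExp

section Measurability

variable {Ω : Type*} {m : MeasurableSpace Ω} {n : Type*} [Fintype n]

lemma measurable_dotProduct {x y : Ω → n → ℝ} (hx : Measurable x) (hy : Measurable y) :
    Measurable fun ω => x ω ⬝ᵥ y ω := by
  unfold dotProduct
  fun_prop

variable [DecidableEq n]

lemma measurable_matrix_det {G : Ω → Matrix n n ℝ} (hG : ∀ i j, Measurable fun ω => G ω i j) :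
    Measurable fun ω => (G ω).det := by
  simp only [det_apply]
  fun_prop

lemma measurable_matrix_inv_mulVec {G : Ω → Matrix n n ℝ} {x : Ω → n → ℝ}
    (hG : ∀ i j, Measurable fun ω => G ω i j) (hx : Measurable x) :
    Measurable fun ω => (G ω)⁻¹ *ᵥ x ω := by
  refine measurable_pi_lambda _ fun i => ?_
  have hadj (j : n) : Measurable fun ω => (G ω).adjugate i j := by
    simp only [adjugate_apply]
    refine measurable_matrix_det fun k l => ?_
    by_cases hk : k = j
    · subst hk
      simp
    · simpa [updateRow_ne hk] using hG k l
  have hdet := measurable_matrix_det hG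
  simp only [Matrix.inv_def, mulVec, dotProduct, Matrix.smul_apply, smul_eq_mul,
    Ring.inverse_eq_inv']
  fun_prop

variable {d : ℕ} {lam : ℝ} {ζ : ℕ → Ω → ℝ} {w : ℕ → Ω → Fin d → ℝ} {t : ℕ}

lemma measurable_regGram (hw : ∀ τ < t, Measurable (w τ)) (i j : Fin d) :
    Measurable fun ω => regGram lam (fun τ => w τ ω) t i j := by
  simp only [regGram, Matrix.add_apply, Matrix.sum_apply, vecMulVec_apply]
  refine measurable_const.add (Finset.measurable_sum _ fun τ hτ => ?_)
  have := hw τ (Finset.mem_range.1 hτ)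
  fun_prop

lemma measurable_weightedSum (hζ : ∀ τ < t, Measurable (ζ τ)) (hw : ∀ τ < t, Measurable (w τ)) :
    Measurable fun ω => weightedSum (fun τ => ζ τ ω) (fun τ => w τ ω) t := by
  unfold weightedSum
  refine Finset.measurable_sum _ fun τ hτ => ?_
  exact (hζ τ (Finset.mem_range.1 hτ)).smul (hw τ (Finset.mem_range.1 hτ))

lemma measurable_selfNormSq (hζ : ∀ τ < t, Measurable (ζ τ)) (hw : ∀ τ < t, Measurable (w τ)) :
    Measurable fun ω => selfNormSq lam (fun τ => ζ τ ω) (fun τ => w τ ω) t :=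
  measurable_dotProduct (measurable_weightedSum hζ hw)
    (measurable_matrix_inv_mulVec (measurable_regGram hw) (measurable_weightedSum hζ hw))

lemma measurable_expWeight (hζ : ∀ τ < t, Measurable (ζ τ)) (hw : ∀ τ < t, Measurable (w τ)) :
    Measurable fun ω => expWeight lam (fun τ => ζ τ ω) (fun τ => w τ ω) t :=
  ((measurable_selfNormSq hζ hw).div_const 54).exp.div
    ((measurable_matrix_det (measurable_regGram hw)).div_const _).sqrt

end Measurability

/-- Maximal inequality for a nonnegative process that does not increase in expectation while the
path stays in the good events `G`. -/
lemma mul_measureReal_compl_add_setIntegral_le {Ω : Type*} {mΩ : MeasurableSpace Ω}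
    {μ : Measure Ω} [IsProbabilityMeasure μ] {G : ℕ → Set Ω} {M : ℕ → Ω → ℝ} {K : ℝ} {n : ℕ}
    (hG : ∀ t, MeasurableSet (G t)) (hanti : ∀ t, G (t + 1) ⊆ G t) (h0 : G 0 = Set.univ)
    (hM0 : ∫ ω, M 0 ω ∂μ ≤ 1)
    (hint : ∀ t, IntegrableOn (M (t + 1)) (G t) μ)
    (hstep : ∀ t, ∫ ω in G t, M (t + 1) ω ∂μ ≤ ∫ ω in G t, M t ω ∂μ)
    (hK : ∀ t < n, ∀ ω ∈ G t \ G (t + 1), K ≤ M (t + 1) ω) {t : ℕ} (ht : t ≤ n) :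
    K * μ.real (G t)ᶜ + ∫ ω in G t, M t ω ∂μ ≤ 1 := by
  induction t with
  | zero => simpa [h0] using hM0
  | succ t ih =>
    have ih := ih (by omega)
    have hdiff : MeasurableSet (G t \ G (t + 1)) := (hG t).diff (hG (t + 1))
    have hsplit : ∫ ω in G t, M (t + 1) ω ∂μ
        = ∫ ω in G t \ G (t + 1), M (t + 1) ω ∂μ + ∫ ω in G (t + 1), M (t + 1) ω ∂μ := by
      rw [← setIntegral_union Set.disjoint_sdiff_left (hG (t + 1))
        ((hint t).mono_set Set.sdiff_subset) ((hint t).mono_set (hanti t)),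
        Set.sdiff_union_of_subset (hanti t)]
    have hlow : K * μ.real (G t \ G (t + 1)) ≤ ∫ ω in G t \ G (t + 1), M (t + 1) ω ∂μ := by
      have := setIntegral_mono_on (f := fun _ => K) (integrable_const K).integrableOn
        ((hint t).mono_set Set.sdiff_subset) hdiff (hK t (by omega))
      rwa [setIntegral_const, smul_eq_mul, mul_comm] at this
    have hcompl : μ.real (G (t + 1))ᶜ = μ.real (G t)ᶜ + μ.real (G t \ G (t + 1)) := by
      rw [← measureReal_union _ hdiff]
      · congr 1
        ext ω
        have := @hanti t ω
        simp only [Set.mem_compl_iff, Set.mem_union, Set.mem_sdiff]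
        tauto
      · exact Set.disjoint_left.2 fun ω h1 h2 => h1 h2.1
    rw [hcompl, mul_add]
    linarith [hstep t]

/-- Self-normalized concentration for a sum `∑ ζ τ • w τ` whose increments are orthogonal to the
past, normalized by the empirical Gram matrix of the `w τ`. -/
theorem one_sub_le_measureReal_selfNormSq_le {Ω : Type*} {m0 : MeasurableSpace Ω}
    {μ : Measure Ω} [IsProbabilityMeasure μ] {ℱ : Filtration ℕ m0} {d T : ℕ} (hd : 0 < d)
    {δ lam β : ℝ} (hδ : 0 < δ) (hlam : 14 ≤ lam) (hβ : 0 ≤ β) (hβlam : β ≤ 27 / 4 * lam)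
    (hβlow : 27 * d * Real.log (1 + 2 * T / d) + 54 * Real.log (1 / δ) ≤ β)
    {ζ : ℕ → Ω → ℝ} {w : ℕ → Ω → Fin d → ℝ}
    (hζm : ∀ t, Measurable[ℱ (t + 1)] (ζ t)) (hwm : ∀ t, Measurable[ℱ (t + 1)] (w t))
    (hζ : ∀ t ω, |ζ t ω| ≤ 3) (hw : ∀ t ω, w t ω ⬝ᵥ w t ω ≤ 4)
    (horth : ∀ t (h : Ω → Fin d → ℝ) (C : ℝ), Measurable[ℱ t] h → (∀ ω, h ω ⬝ᵥ h ω ≤ C) →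
      Integrable (fun ω => (h ω ⬝ᵥ w t ω) * ζ t ω) μ ∧
        ∫ ω, (h ω ⬝ᵥ w t ω) * ζ t ω ∂μ = 0) :
    1 - δ ≤ μ.real {ω | ∀ t < T, selfNormSq lam (fun τ => ζ τ ω) (fun τ => w τ ω) t ≤ β} := by
  have hlam0 : 0 < lam := by linarith
  have hζt (t : ℕ) : ∀ τ < t, Measurable[ℱ t] (ζ τ) :=
    fun τ hτ => (hζm τ).mono (ℱ.mono hτ) le_rfl
  have hwt (t : ℕ) : ∀ τ < t, Measurable[ℱ t] (w τ) :=
    fun τ hτ => (hwm τ).mono (ℱ.mono hτ) le_rfl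
  set N : ℕ → Ω → ℝ := fun t ω => selfNormSq lam (fun τ => ζ τ ω) (fun τ => w τ ω) t with hN
  set M : ℕ → Ω → ℝ := fun t ω => expWeight lam (fun τ => ζ τ ω) (fun τ => w τ ω) t with hM
  set y : ℕ → Ω → Fin d → ℝ := fun t ω =>
    (regGram lam (fun τ => w τ ω) t)⁻¹ *ᵥ weightedSum (fun τ => ζ τ ω) (fun τ => w τ ω) t with hy
  have hNm (t : ℕ) : Measurable[ℱ t] (N t) := measurable_selfNormSq (hζt t) (hwt t)
  have hMm (t : ℕ) : Measurable[ℱ t] (M t) := measurable_expWeight (hζt t) (hwt t)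
  have hym (t : ℕ) : Measurable[ℱ t] (y t) := measurable_matrix_inv_mulVec
    (measurable_regGram (hwt t)) (measurable_weightedSum (hζt t) (hwt t))
  set G : ℕ → Set Ω := fun t => {ω | ∀ s ≤ t, N s ω ≤ β} with hG
  have hGF (t : ℕ) : MeasurableSet[ℱ t] (G t) := by
    have : G t = ⋂ s, ⋂ _ : s ≤ t, {ω | N s ω ≤ β} := by
      ext ω; simp [hG]
    rw [this]
    refine MeasurableSet.iInter fun s => MeasurableSet.iInter fun hs => ?_
    exact ℱ.mono hs _ (measurableSet_le (hNm s) measurable_const)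
  have hGm (t : ℕ) : MeasurableSet (G t) := ℱ.le t _ (hGF t)
  have hMnn (t : ℕ) (ω : Ω) : 0 ≤ M t ω := expWeight_nonneg t
  have hMle (t : ℕ) {ω : Ω} (hω : ω ∈ G t) : M t ω ≤ Real.exp (β / 54) := by
    refine (expWeight_le hlam0 t).trans (Real.exp_le_exp.2 ?_)
    have : N t ω ≤ β := hω t le_rfl
    simp only [hN] at this
    linarith
  have hMi (t : ℕ) : IntegrableOn (M t) (G t) μ := by
    refine Integrable.of_bound ((hMm t).mono (ℱ.le t) le_rfl).aestronglyMeasurable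
      (Real.exp (β / 54)) ?_
    filter_upwards [ae_restrict_mem (hGm t)] with ω hω
    rw [Real.norm_of_nonneg (hMnn t ω)]
    exact hMle t hω
  -- the vector multiplying `ζ t • w t` in the one-step bound, cut off outside `G t`
  set h : ℕ → Ω → Fin d → ℝ := fun t => (G t).indicator fun ω => M t ω • y t ω with hh
  have hhm (t : ℕ) : Measurable[ℱ t] (h t) := ((hMm t).smul (hym t)).indicator (hGF t)
  have hhb (t : ℕ) (ω : Ω) : h t ω ⬝ᵥ h t ω ≤ Real.exp (β / 54) ^ 2 * (27 / 4) := by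
    by_cases hω : ω ∈ G t
    · have h1 : lam * (y t ω ⬝ᵥ y t ω) ≤ N t ω :=
        (regGram_posDef hlam0 t).mul_dotProduct_inv_mulVec_le (mul_dotProduct_le_regGram t) _
      have h2 : N t ω ≤ β := hω t le_rfl
      have h3 : y t ω ⬝ᵥ y t ω ≤ 27 / 4 := le_of_mul_le_mul_left (by linarith) hlam0
      have h4 : 0 ≤ y t ω ⬝ᵥ y t ω := by simpa using dotProduct_star_self_nonneg (y t ω)
      simp only [hh, Set.indicator_of_mem hω, smul_dotProduct, dotProduct_smul, smul_eq_mul]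
      rw [← mul_assoc, ← sq]
      exact mul_le_mul (pow_le_pow_left₀ (hMnn t ω) (hMle t hω) 2) h3 h4 (by positivity)
    · simp only [hh, Set.indicator_of_notMem hω, dotProduct_zero]
      positivity
  have hbound (t : ℕ) {ω : Ω} (hω : ω ∈ G t) :
      M (t + 1) ω ≤ M t ω + (h t ω ⬝ᵥ w t ω) * ζ t ω / 27 := by
    have h1 : N t ω ≤ β := hω t le_rfl
    refine (expWeight_succ_le hlam (hζ t ω) (hw t ω) (h1.trans hβlam)).trans (le_of_eq ?_)
    simp only [hh, Set.indicator_of_mem hω, smul_dotProduct, smul_eq_mul, hM, hy]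
    rw [dotProduct_comm (w t ω)]
    ring
  have hI (t : ℕ) : Integrable (fun ω => (h t ω ⬝ᵥ w t ω) * ζ t ω / 27) μ :=
    (horth t (h t) _ (hhm t) (hhb t)).1.div_const 27
  have hMi' (t : ℕ) : IntegrableOn (M (t + 1)) (G t) μ := by
    refine Integrable.mono' ((hMi t).add (hI t).integrableOn)
      ((hMm (t + 1)).mono (ℱ.le _) le_rfl).aestronglyMeasurable ?_
    filter_upwards [ae_restrict_mem (hGm t)] with ω hω
    rw [Real.norm_of_nonneg (hMnn _ ω)]
    exact hbound t hω
  have hstep (t : ℕ) : ∫ ω in G t, M (t + 1) ω ∂μ ≤ ∫ ω in G t, M t ω ∂μ := by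
    refine (setIntegral_mono_on (hMi' t) ((hMi t).add (hI t).integrableOn) (hGm t)
      fun ω hω => hbound t hω).trans ?_
    simp only [Pi.add_apply]
    rw [integral_add (hMi t) (hI t).integrableOn]
    have h1 : ∫ ω in G t, (h t ω ⬝ᵥ w t ω) * ζ t ω / 27 ∂μ
        = ∫ ω, (h t ω ⬝ᵥ w t ω) * ζ t ω / 27 ∂μ := by
      refine setIntegral_eq_integral_of_forall_compl_eq_zero fun ω hω => ?_
      simp [hh, Set.indicator_of_notMem hω]
    rw [h1, integral_div, (horth t (h t) _ (hhm t) (hhb t)).2]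
    simp
  have hK : ∀ t < T, ∀ ω ∈ G t \ G (t + 1), 1 / δ ≤ M (t + 1) ω := by
    rintro t ht ω ⟨hωt, hωt'⟩
    have hNt : β < N (t + 1) ω := by
      by_contra! hle
      exact hωt' fun s hs => (Nat.le_succ_iff.1 hs).elim (hωt s) fun e => e ▸ hle
    have hdet := det_regGram_div_le hd (by linarith : 2 ≤ lam) (fun τ => hw τ ω) (T := T)
      (t := t + 1) ht
    have hpos : 0 < (regGram lam (fun τ => w τ ω) (t + 1)).det / lam ^ d :=
      div_pos (regGram_posDef hlam0 _).det_pos (by positivity)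
    have h1 : (0 : ℝ) < 1 + 2 * T / d := by positivity
    have hsqrt : √((regGram lam (fun τ => w τ ω) (t + 1)).det / lam ^ d)
        ≤ Real.exp (d * Real.log (1 + 2 * T / d) / 2) := by
      rw [Real.sqrt_le_left (Real.exp_pos _).le, ← Real.exp_nat_mul]
      refine hdet.trans (le_of_eq ?_)
      rw [← Real.exp_log (pow_pos h1 d), Real.log_pow]
      congr 1
      push_cast
      ring
    simp only [hM, expWeight]
    rw [le_div_iff₀ (Real.sqrt_pos.2 hpos)]
    calc 1 / δ * √((regGram lam (fun τ => w τ ω) (t + 1)).det / lam ^ d)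
        ≤ Real.exp (Real.log (1 / δ)) * Real.exp (d * Real.log (1 + 2 * T / d) / 2) := by
          rw [Real.exp_log (by positivity)]
          gcongr
      _ ≤ _ := by
          rw [← Real.exp_add, Real.exp_le_exp]
          simp only [hN] at hNt
          linarith
  have hG0 : G 0 = Set.univ := by
    refine Set.eq_univ_of_forall fun ω s hs => ?_
    obtain rfl : s = 0 := by omega
    simpa [hN, selfNormSq_zero] using hβ
  have hfin := mul_measureReal_compl_add_setIntegral_le (μ := μ) hGm
    (fun t ω hω s hs => hω s (hs.trans t.le_succ)) hG0
    (by simp [hM, expWeight_zero hlam0]) hMi' hstep hK le_rfl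
  have hnn : 0 ≤ ∫ ω in G T, M T ω ∂μ := integral_nonneg fun ω => hMnn T ω
  have hc : μ.real (G T)ᶜ ≤ δ := by
    have : 1 / δ * μ.real (G T)ᶜ ≤ 1 := by linarith
    rwa [one_div, inv_mul_le_iff₀ hδ, mul_one] at this
  rw [probReal_compl_eq_one_sub (hGm T)] at hc
  refine (by linarith : 1 - δ ≤ μ.real (G T)).trans (measureReal_mono ?_)
  exact fun ω hω t ht => hω t ht.le

lemma dotProduct_le_half_add {n : Type*} [Fintype n] (x y : n → ℝ) :
    x ⬝ᵥ y ≤ (x ⬝ᵥ x + y ⬝ᵥ y) / 2 := by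
  have h : 0 ≤ (x - y) ⬝ᵥ (x - y) := by simpa using dotProduct_star_self_nonneg (x - y)
  simp only [sub_dotProduct, dotProduct_sub] at h
  rw [dotProduct_comm y x] at h
  linarith

/-- A convex combination of vectors in the Euclidean unit ball lies in the unit ball. -/
lemma dotProduct_sum_smul_self_le_one {A n : Type*} [Fintype A] [Fintype n] {q : A → ℝ}
    {z : A → n → ℝ} (hq0 : ∀ b, 0 ≤ q b) (hq1 : ∑ b, q b = 1) (hz : ∀ b, z b ⬝ᵥ z b ≤ 1) :
    (∑ b, q b • z b) ⬝ᵥ (∑ b, q b • z b) ≤ 1 := by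
  set v := ∑ b, q b • z b with hv
  have h : v ⬝ᵥ v ≤ ∑ b, q b * ((1 + v ⬝ᵥ v) / 2) := by
    conv_lhs => rw [hv, sum_dotProduct]
    refine Finset.sum_le_sum fun b _ => ?_
    rw [smul_dotProduct, smul_eq_mul, ← hv]
    refine mul_le_mul_of_nonneg_left ?_ (hq0 b)
    linarith [dotProduct_le_half_add (z b) v, hz b]
  rw [← Finset.sum_mul, hq1] at h
  linarith

/-- The centered feature of a randomly drawn action, times a confounder known before the draw plus
a conditionally independent centered noise, is orthogonal to the past. -/
lemma integral_dotProduct_centered_mul_eq_zero {Ω : Type*} {m mΩ : MeasurableSpace Ω}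
    [StandardBorelSpace Ω] {μ : Measure Ω} [IsProbabilityMeasure μ] (hm : m ≤ mΩ)
    {A n : Type*} [Fintype A] [DecidableEq A] [MeasurableSpace A] [MeasurableSingletonClass A]
    [Fintype n] {a : Ω → A} {q : Ω → A → ℝ} {z : A → Ω → n → ℝ} {g ξ : Ω → ℝ} {h : Ω → n → ℝ}
    {c C : ℝ} (ha : Measurable a) (hq : ∀ b, Measurable[m] fun ω => q ω b)
    (hq0 : ∀ ω b, 0 ≤ q ω b) (hq1 : ∀ ω, ∑ b, q ω b = 1)
    (hlaw : ∀ b, μ[(fun ω => if a ω = b then (1 : ℝ) else 0) | m] =ᵐ[μ] fun ω => q ω b)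
    (hz : ∀ b, Measurable[m] (z b)) (hz1 : ∀ b ω, z b ω ⬝ᵥ z b ω ≤ 1)
    (hg : Measurable[m] g) (hgc : ∀ ω, |g ω| ≤ c)
    (hξ : Measurable ξ) (hξ1 : ∀ ω, |ξ ω| ≤ 1) (hξ0 : μ[ξ | m] =ᵐ[μ] 0)
    (hind : CondIndepFun m hm a ξ μ) (hh : Measurable[m] h) (hhC : ∀ ω, h ω ⬝ᵥ h ω ≤ C) :
    Integrable (fun ω => (h ω ⬝ᵥ (z (a ω) ω - ∑ b, q ω b • z b ω)) * (g ω + ξ ω)) μ ∧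
      ∫ ω, (h ω ⬝ᵥ (z (a ω) ω - ∑ b, q ω b • z b ω)) * (g ω + ξ ω) ∂μ = 0 := by
  have hq_le (ω : Ω) (b : A) : q ω b ≤ 1 := by
    rw [← hq1 ω]
    exact Finset.single_le_sum (fun b _ => hq0 ω b) (Finset.mem_univ b)
  have hE (b : A) : MeasurableSet (a ⁻¹' {b}) := ha (measurableSet_singleton b)
  have hif (b : A) : (fun ω => if a ω = b then (1 : ℝ) else 0)
      = (a ⁻¹' {b}).indicator fun _ => 1 := by
    ext ω
    by_cases hω : a ω = b <;> simp [hω]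
  have hIi (b : A) : Integrable ((a ⁻¹' {b}).indicator fun _ => (1 : ℝ)) μ :=
    (integrable_const 1).indicator (hE b)
  have hqi (b : A) : Integrable (fun ω => q ω b) μ :=
    .of_bound ((hq b).mono hm le_rfl).aestronglyMeasurable 1
      (.of_forall fun ω => by rw [Real.norm_of_nonneg (hq0 ω b)]; exact hq_le ω b)
  have hξi : Integrable ξ μ := .of_bound hξ.aestronglyMeasurable 1 (.of_forall hξ1)
  set k : A → Ω → ℝ := fun b ω => h ω ⬝ᵥ z b ω with hk
  have hkm (b : A) : Measurable[m] (k b) := measurable_dotProduct hh (hz b)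
  have hkC (b : A) (ω : Ω) : |k b ω| ≤ √C := by
    refine Real.abs_le_sqrt ((dotProduct_sq_le _ _).trans ?_)
    have h0 : 0 ≤ h ω ⬝ᵥ h ω := by simpa using dotProduct_star_self_nonneg (h ω)
    nlinarith [hz1 b ω, hhC ω]
  have hD (b : A) := integral_mul_eq_zero_of_condExp_eq_zero (μ := μ) hm (C := √C * c)
    (k := fun ω => k b ω * g ω) (X := (a ⁻¹' {b}).indicator (fun _ => (1 : ℝ)) - fun ω => q ω b)
    ((hkm b).mul hg)
    (fun ω => by
      rw [abs_mul]
      exact mul_le_mul (hkC b ω) (hgc ω) (abs_nonneg _) (Real.sqrt_nonneg _))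
    ((hIi b).sub (hqi b))
    (by
      have h1 := condExp_sub (hIi b) (hqi b) m
      have h2 := hlaw b
      rw [hif] at h2
      have h3 := condExp_of_stronglyMeasurable hm (hq b).stronglyMeasurable (hqi b)
      filter_upwards [h1, h2] with ω e1 e2
      rw [e1, Pi.sub_apply, e2, h3]
      simp)
  have hX (b : A) := integral_mul_eq_zero_of_condExp_eq_zero (μ := μ) hm (C := √C)
    (k := k b) (X := (a ⁻¹' {b}).indicator ξ) (hkm b) (hkC b) (hξi.indicator (hE b))
    (condExp_indicator_eq_zero_of_condIndepFun hm ha hξ hξi hind (hq b) (fun ω => hq0 ω b)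
      (fun ω => hq_le ω b) (by simpa only [hif] using hlaw b) hξ0)
  have hQ (b : A) := integral_mul_eq_zero_of_condExp_eq_zero (μ := μ) hm (C := √C * 1)
    (k := fun ω => k b ω * q ω b) (X := ξ) ((hkm b).mul (hq b))
    (fun ω => by
      rw [abs_mul, abs_of_nonneg (hq0 ω b)]
      exact mul_le_mul (hkC b ω) (hq_le ω b) (hq0 ω b) (Real.sqrt_nonneg _)) hξi hξ0
  have hdecomp : (fun ω => (h ω ⬝ᵥ (z (a ω) ω - ∑ b, q ω b • z b ω)) * (g ω + ξ ω)) =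
      fun ω => ∑ b, (k b ω * g ω * ((a ⁻¹' {b}).indicator (fun _ => (1 : ℝ)) - fun ω => q ω b) ω
        + k b ω * (a ⁻¹' {b}).indicator ξ ω - k b ω * q ω b * ξ ω) := by
    ext ω
    have h1 : k (a ω) ω = ∑ b, k b ω * (a ⁻¹' {b}).indicator (fun _ => (1 : ℝ)) ω := by
      simp only [← hif]
      simp
    have h2 (b : A) : (a ⁻¹' {b}).indicator ξ ω
        = (a ⁻¹' {b}).indicator (fun _ => (1 : ℝ)) ω * ξ ω := by
      by_cases hω : ω ∈ a ⁻¹' {b} <;> simp only [hω, Set.indicator_of_mem,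
        Set.indicator_of_notMem, not_false_eq_true, one_mul, zero_mul]
    have h3 : h ω ⬝ᵥ (z (a ω) ω - ∑ b, q ω b • z b ω)
        = ∑ b, k b ω * ((a ⁻¹' {b}).indicator (fun _ => (1 : ℝ)) ω - q ω b) := by
      simp only [mul_sub, Finset.sum_sub_distrib]
      rw [← h1, dotProduct_sub, dotProduct_sum]
      simp only [dotProduct_smul, smul_eq_mul, hk, mul_comm]
    rw [h3, Finset.sum_mul]
    refine Finset.sum_congr rfl fun b _ => ?_
    rw [h2, Pi.sub_apply]
    ring
  rw [hdecomp]
  have hint (b : A) := ((hD b).1.add (hX b).1).sub (hQ b).1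
  refine ⟨integrable_finsetSum _ fun b _ => hint b,
    (integral_finsetSum _ fun b _ => hint b).trans (Finset.sum_eq_zero fun b _ => ?_)⟩
  rw [integral_sub' ((hD b).1.add (hX b).1) (hQ b).1, integral_add' (hD b).1 (hX b).1, (hD b).2,
    (hX b).2, (hQ b).2]
  simp

/-- Error of the ridge estimator: the regularization bias plus the self-normalized noise. -/
lemma sqrt_ridge_error_le {d : ℕ} {lam : ℝ} (hlam : 0 < lam) {θ : Fin d → ℝ} (hθ : θ ⬝ᵥ θ ≤ 1)
    {ζ r : ℕ → ℝ} {w : ℕ → Fin d → ℝ} (hr : ∀ τ, r τ = θ ⬝ᵥ w τ + ζ τ) (t : ℕ) :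
    √(((regGram lam w t)⁻¹ *ᵥ weightedSum r w t - θ) ⬝ᵥ regGram lam w t *ᵥ
        ((regGram lam w t)⁻¹ *ᵥ weightedSum r w t - θ)) ≤
      √lam + √(selfNormSq lam ζ w t) := by
  have hpd := regGram_posDef hlam t (w := w)
  have hdet : IsUnit (regGram lam w t).det := hpd.det_pos.ne'.isUnit
  set Γ := regGram lam w t with hΓ
  have hsum : weightedSum r w t = Γ *ᵥ θ + (weightedSum ζ w t - lam • θ) := by
    have h1 : weightedSum r w t
        = (∑ τ ∈ Finset.range t, vecMulVec (w τ) (w τ)) *ᵥ θ + weightedSum ζ w t := by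
      rw [sum_mulVec, weightedSum, weightedSum, ← Finset.sum_add_distrib]
      refine Finset.sum_congr rfl fun τ _ => ?_
      rw [vecMulVec_mulVec, hr, add_smul, dotProduct_comm θ]
      simp
    rw [h1, hΓ, regGram, add_mulVec, smul_mulVec, one_mulVec]
    abel
  have herr : Γ⁻¹ *ᵥ weightedSum r w t - θ = Γ⁻¹ *ᵥ (weightedSum ζ w t - lam • θ) := by
    rw [hsum, mulVec_add, mulVec_mulVec, nonsing_inv_mul _ hdet, one_mulVec]
    abel
  rw [herr, mulVec_mulVec _ Γ, mul_nonsing_inv _ hdet, one_mulVec, dotProduct_comm, add_comm]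
  refine (hpd.inv.posSemidef.sqrt_dotProduct_mulVec_sub_le _ _).trans ?_
  refine add_le_add le_rfl (Real.sqrt_le_sqrt ?_)
  have h2 := hpd.dotProduct_inv_mulVec_le_div hlam (mul_dotProduct_le_regGram t) θ
  rw [le_div_iff₀ hlam] at h2
  simp only [mulVec_smul, smul_dotProduct, dotProduct_smul, smul_eq_mul]
  nlinarith [mul_le_mul_of_nonneg_left h2 hlam.le]
/-- **Concentration of the orthogonalized estimator, general case (Lemma: estimator_general).**
Semiparametric contextual bandit under the environment and boundedness assumptions, with the
learner sampling `a_t ∼ π_t`, an `F_t`-measurable distribution over the (finite) action set;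
rewards are `r_t = ⟨θ, z_{t,a_t}⟩ + f_t + ξ_t`.  With `μ_t = E_{a∼π_t}[z_{t,a}]`,
`Γ_t = λI + ∑_{τ<t}(z_τ−μ_τ)(z_τ−μ_τ)ᵀ`, `θ̂_t = Γ_t⁻¹ ∑_{τ<t}(z_τ−μ_τ)r_τ`, and
`λ ≥ 4d log(9T) + 8 log(4T/δ)`, with probability at least `1 − δ`,
`‖θ̂_t − θ‖_{Γ_t} ≤ √λ + √(27 d log(1 + 2T/d) + 54 log(4T/δ))` simultaneously for all
rounds `t` (i.e. all sample sizes `< T`). -/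
theorem stmt_14 {Ω : Type*} {m0 : MeasurableSpace Ω} [StandardBorelSpace Ω] [Nonempty Ω]
    (μ : Measure Ω) [IsProbabilityMeasure μ]
    (ℱ : Filtration ℕ m0)
    {A : Type*} [Fintype A] [DecidableEq A] [Nonempty A] [MeasurableSpace A]
    [MeasurableSingletonClass A]
    {d T : ℕ} (hd : 0 < d)
    (δ lam : ℝ) (hδ : 0 < δ) (hδ1 : δ < 1) (hlam : 0 < lam)
    (hlamlb : 4 * d * Real.log (9 * T) + 8 * Real.log (4 * T / δ) ≤ lam)
    (θ : Fin d → ℝ) (hθ : Real.sqrt (θ ⬝ᵥ θ) ≤ 1)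
    -- context features, confounder and noise: adapted, adversarial, bounded
    (z : ℕ → A → Ω → (Fin d → ℝ)) (f : ℕ → Ω → ℝ) (ξ : ℕ → Ω → ℝ)
    (hzmeas : ∀ t b, Measurable[ℱ t] (z t b))
    (hzbd : ∀ t b ω, Real.sqrt (z t b ω ⬝ᵥ z t b ω) ≤ 1)
    (hfmeas : ∀ t, Measurable[ℱ t] (f t))
    (hfbd : ∀ t ω, f t ω ∈ Set.Icc (-1 : ℝ) 1)
    (hξmeas : ∀ t, Measurable[ℱ (t + 1)] (ξ t))
    (hξbd : ∀ t ω, |ξ t ω| ≤ 1)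
    (hξcent : ∀ t, μ[ξ t | ℱ t] =ᵐ[μ] 0)
    -- the action and its conditional distribution
    (a : ℕ → Ω → A) (π : ℕ → Ω → A → ℝ)
    (hameas : ∀ t, Measurable[ℱ (t + 1)] (a t))
    (hπmeas : ∀ t b, Measurable[ℱ t] (fun ω => π t ω b))
    (hπprob : ∀ t ω, (∀ b, 0 ≤ π t ω b) ∧ (∑ b, π t ω b) = 1)
    (hπlaw : ∀ t b, μ[(fun ω => if a t ω = b then (1 : ℝ) else 0) | ℱ t]
      =ᵐ[μ] fun ω => π t ω b)
    (haξ : ∀ t, CondIndepFun (ℱ t) (ℱ.le t) (a t) (ξ t) μ)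
    -- rewards, mean features, and the orthogonalized estimator
    (r : ℕ → Ω → ℝ) (hr : ∀ t ω, r t ω = θ ⬝ᵥ z t (a t ω) ω + f t ω + ξ t ω)
    (mu : ℕ → Ω → (Fin d → ℝ)) (hmu : ∀ t ω, mu t ω = ∑ b, π t ω b • z t b ω)
    (Γ : ℕ → Ω → Matrix (Fin d) (Fin d) ℝ)
    (hΓ : ∀ t ω, Γ t ω = lam • (1 : Matrix (Fin d) (Fin d) ℝ) +
      ∑ τ ∈ Finset.range t,
        vecMulVec (z τ (a τ ω) ω - mu τ ω) (z τ (a τ ω) ω - mu τ ω))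
    (θhat : ℕ → Ω → (Fin d → ℝ))
    (hθhat : ∀ t ω, θhat t ω =
      (Γ t ω)⁻¹.mulVec (∑ τ ∈ Finset.range t, r τ ω • (z τ (a τ ω) ω - mu τ ω))) :
    ENNReal.ofReal (1 - δ) ≤
      μ {ω | ∀ t < T,
        Real.sqrt ((θhat t ω - θ) ⬝ᵥ (Γ t ω).mulVec (θhat t ω - θ)) ≤
          Real.sqrt lam +
            Real.sqrt (27 * d * Real.log (1 + 2 * T / d) + 54 * Real.log (4 * T / δ))} := by
  rcases Nat.eq_zero_or_pos T with rfl | hT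
  · have : {ω | ∀ t < 0,
        Real.sqrt ((θhat t ω - θ) ⬝ᵥ (Γ t ω).mulVec (θhat t ω - θ)) ≤
          Real.sqrt lam + Real.sqrt (27 * d * Real.log (1 + 2 * (0 : ℕ) / d) +
            54 * Real.log (4 * (0 : ℕ) / δ))} = Set.univ :=
      Set.eq_univ_of_forall fun ω t ht => absurd ht (Nat.not_lt_zero t)
    rw [this, measure_univ]
    exact ENNReal.ofReal_le_one.2 (by linarith)
  have hT1 : (1 : ℝ) ≤ T := by exact_mod_cast hT
  have hd1 : (1 : ℝ) ≤ d := by exact_mod_cast hd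
  have hθ1 : θ ⬝ᵥ θ ≤ 1 := by simpa using (Real.sqrt_le_left zero_le_one).1 hθ
  have hz1 (t : ℕ) (b : A) (ω : Ω) : z t b ω ⬝ᵥ z t b ω ≤ 1 := by
    simpa using (Real.sqrt_le_left zero_le_one).1 (hzbd t b ω)
  have hmu1 (t : ℕ) (ω : Ω) : mu t ω ⬝ᵥ mu t ω ≤ 1 := by
    rw [hmu]
    exact dotProduct_sum_smul_self_le_one (hπprob t ω).1 (hπprob t ω).2 fun b => hz1 t b ω
  set w : ℕ → Ω → Fin d → ℝ := fun t ω => z t (a t ω) ω - mu t ω with hw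
  set g : ℕ → Ω → ℝ := fun t ω => θ ⬝ᵥ mu t ω + f t ω with hg
  set ζ : ℕ → Ω → ℝ := fun t ω => g t ω + ξ t ω with hζ
  have hmum (t : ℕ) : Measurable[ℱ t] (mu t) := by
    rw [funext (hmu t)]
    exact Finset.measurable_sum _ fun b _ => (hπmeas t b).smul (hzmeas t b)
  have hgm (t : ℕ) : Measurable[ℱ t] (g t) :=
    (measurable_dotProduct measurable_const (hmum t)).add (hfmeas t)
  have hg2 (t : ℕ) (ω : Ω) : |g t ω| ≤ 2 := by
    have h1 : |θ ⬝ᵥ mu t ω| ≤ 1 := by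
      refine abs_le_one_iff_mul_self_le_one.2 ?_
      have h0 : 0 ≤ mu t ω ⬝ᵥ mu t ω := by simpa using dotProduct_star_self_nonneg (mu t ω)
      nlinarith [dotProduct_sq_le θ (mu t ω), hmu1 t ω]
    have h2 : |f t ω| ≤ 1 := abs_le.2 (hfbd t ω)
    exact (abs_add_le _ _).trans (by linarith)
  have hζ3 (t : ℕ) (ω : Ω) : |ζ t ω| ≤ 3 :=
    (abs_add_le _ _).trans (by linarith [hg2 t ω, hξbd t ω])
  have hw4 (t : ℕ) (ω : Ω) : w t ω ⬝ᵥ w t ω ≤ 4 := by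
    have h1 := dotProduct_le_half_add (z t (a t ω) ω) (-mu t ω)
    simp only [dotProduct_neg, neg_dotProduct, neg_neg] at h1
    simp only [hw, sub_dotProduct, dotProduct_sub]
    rw [dotProduct_comm (mu t ω) (z t (a t ω) ω)]
    linarith [hz1 t (a t ω) ω, hmu1 t ω]
  have hζm (t : ℕ) : Measurable[ℱ (t + 1)] (ζ t) :=
    ((hgm t).mono (ℱ.mono t.le_succ) le_rfl).add (hξmeas t)
  have hwm (t : ℕ) : Measurable[ℱ (t + 1)] (w t) := by
    have h1 : (fun ω => z t (a t ω) ω) = fun ω => ∑ b, (a t ⁻¹' {b}).indicator (z t b) ω := by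
      ext1 ω
      rw [Finset.sum_eq_single (a t ω) (fun b _ hb => ?_) (by simp)]
      · simp
      · exact Set.indicator_of_notMem (fun h => hb h.symm) _
    refine Measurable.sub ?_ ((hmum t).mono (ℱ.mono t.le_succ) le_rfl)
    rw [h1]
    exact Finset.measurable_sum _ fun b _ => ((hzmeas t b).mono (ℱ.mono t.le_succ) le_rfl).indicator
      (hameas t (measurableSet_singleton b))
  set β : ℝ := 27 * d * Real.log (1 + 2 * T / d) + 54 * Real.log (4 * T / δ) with hβ
  have hTd : (1 : ℝ) ≤ 1 + 2 * T / d := by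
    have : (0 : ℝ) ≤ 2 * T / d := by positivity
    linarith
  have hlogTd : 0 ≤ Real.log (1 + 2 * T / d) := Real.log_nonneg hTd
  have h4T : 4 ≤ 4 * T / δ := by
    rw [le_div_iff₀ hδ]
    nlinarith
  have hlog4 : 1 ≤ Real.log (4 * T / δ) := by
    rw [Real.le_log_iff_exp_le (by linarith)]
    linarith [Real.exp_one_lt_d9]
  have hlog9 : 2 ≤ Real.log (9 * T) := by
    rw [Real.le_log_iff_exp_le (by linarith), show (2 : ℝ) = ((2 : ℕ) : ℝ) * 1 by norm_num,
      Real.exp_nat_mul]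
    nlinarith [Real.exp_one_lt_d9, Real.exp_pos 1]
  have hlogle : Real.log (1 + 2 * T / d) ≤ Real.log (9 * T) := by
    refine Real.log_le_log (by linarith) ?_
    have : 2 * (T : ℝ) / d ≤ 2 * T := div_le_self (by positivity) hd1
    linarith
  have hβlow : 27 * d * Real.log (1 + 2 * T / d) + 54 * Real.log (1 / δ) ≤ β := by
    have : Real.log (1 / δ) ≤ Real.log (4 * T / δ) :=
      Real.log_le_log (by positivity) (by gcongr; linarith)
    linarith
  have hβlam : β ≤ 27 / 4 * lam := by
    have : (d : ℝ) * Real.log (1 + 2 * T / d) ≤ d * Real.log (9 * T) := by gcongr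
    linarith
  have hlam14 : 14 ≤ lam := by nlinarith
  have hconc := one_sub_le_measureReal_selfNormSq_le (μ := μ) (ℱ := ℱ) hd hδ hlam14
    (by positivity) hβlam hβlow hζm hwm hζ3 hw4 fun t h C hh hhC => by
      have h1 := integral_dotProduct_centered_mul_eq_zero (ℱ.le t)
        ((hameas t).mono (ℱ.le (t + 1)) le_rfl) (hπmeas t) (fun ω => (hπprob t ω).1)
        (fun ω => (hπprob t ω).2) (hπlaw t) (hzmeas t) (hz1 t) (hgm t) (hg2 t)
        ((hξmeas t).mono (ℱ.le (t + 1)) le_rfl) (hξbd t) (hξcent t) (haξ t) hh hhC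
      simpa only [← hmu] using h1
  refine (ENNReal.ofReal_le_ofReal hconc).trans ?_
  rw [ofReal_measureReal]
  refine measure_mono fun ω hω t ht => ?_
  have hrζ (τ : ℕ) : r τ ω = θ ⬝ᵥ w τ ω + ζ τ ω := by
    simp only [hr, hw, hζ, hg, dotProduct_sub]
    ring
  have hridge := sqrt_ridge_error_le hlam hθ1 hrζ t
  have hΓ' : Γ t ω = regGram lam (fun τ => w τ ω) t := hΓ t ω
  have hθhat' : θhat t ω = (regGram lam (fun τ => w τ ω) t)⁻¹ *ᵥ
      weightedSum (fun τ => r τ ω) (fun τ => w τ ω) t := by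
    rw [hθhat, hΓ']
    rfl
  rw [hθhat', hΓ']
  exact hridge.trans (add_le_add le_rfl (Real.sqrt_le_sqrt (hω t ht)))
end

section
/- Let Γ be a d×d positive definite matrix, θ, θ̂ ∈ ℝ^d with ‖θ̂ − θ‖_Γ ≤ γ for some γ ≥ 0, and let z_a, z_b ∈ ℝ^d be two action feature vectors. If action b is eliminated by action a, i.e. ⟨θ̂, z_a − z_b⟩ > γ·‖z_a − z_b‖_{Γ⁻¹}, then ⟨θ, z_a − z_b⟩ ≥ 0; that is, the elimination rule never eliminates an action whose true expected reward is strictly larger. -/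
open Matrix

/-- Cauchy–Schwarz inequality for the bilinear form of a positive semidefinite real matrix. -/
theorem Matrix.PosSemidef.sq_dotProduct_mulVec_le {n : Type*} [Fintype n] {M : Matrix n n ℝ}
    (hM : M.PosSemidef) (u w : n → ℝ) :
    (u ⬝ᵥ M *ᵥ w) ^ 2 ≤ (u ⬝ᵥ M *ᵥ u) * (w ⬝ᵥ M *ᵥ w) := by
  have hsymm : w ⬝ᵥ M *ᵥ u = u ⬝ᵥ M *ᵥ w := by
    have hT : Mᵀ = M := by simpa using hM.isHermitian.eq
    rw [dotProduct_comm, ← vecMul_transpose, hT, ← dotProduct_mulVec]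
  have hquad (t : ℝ) :
      0 ≤ (u ⬝ᵥ M *ᵥ u) * (t * t) + (2 * (u ⬝ᵥ M *ᵥ w)) * t + w ⬝ᵥ M *ᵥ w := by
    have h := hM.dotProduct_mulVec_nonneg (t • u + w)
    simp only [star_trivial, mulVec_add, mulVec_smul, add_dotProduct, dotProduct_add,
      smul_dotProduct, dotProduct_smul, smul_eq_mul, hsymm] at h
    linarith
  have h := discrim_le_zero hquad
  rw [discrim] at h
  linarith

/-- Duality of the Mahalanobis norms of `M` and `M⁻¹`. -/
theorem Matrix.PosDef.dotProduct_le_sqrt_mul_sqrt {n : Type*} [Fintype n] [DecidableEq n]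
    {M : Matrix n n ℝ} (hM : M.PosDef) (u x : n → ℝ) :
    u ⬝ᵥ x ≤ √(u ⬝ᵥ M *ᵥ u) * √(x ⬝ᵥ M⁻¹ *ᵥ x) := by
  have hx : M *ᵥ (M⁻¹ *ᵥ x) = x := by
    rw [mulVec_mulVec, mul_nonsing_inv _ ((isUnit_iff_isUnit_det M).mp hM.isUnit), one_mulVec]
  have h := hM.posSemidef.sq_dotProduct_mulVec_le u (M⁻¹ *ᵥ x)
  rw [hx, dotProduct_comm (M⁻¹ *ᵥ x) x] at h
  have hu : 0 ≤ u ⬝ᵥ M *ᵥ u := by simpa using hM.posSemidef.dotProduct_mulVec_nonneg u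
  rw [← Real.sqrt_mul hu]
  exact Real.le_sqrt_of_sq_le h

/-- **Soundness of the elimination rule.**
Let `Γ ≻ 0`, `‖θ̂ − θ‖_Γ ≤ γ` with `γ ≥ 0`, and let `z_a, z_b` be two action feature vectors.
If `⟨θ̂, z_a − z_b⟩ > γ ‖z_a − z_b‖_{Γ⁻¹}` (action `b` is eliminated by `a`),
then `⟨θ, z_a − z_b⟩ ≥ 0`: the eliminated action's true reward is not strictly larger. -/
theorem stmt_15 {d : ℕ} (γ : ℝ) (hγ : 0 ≤ γ)
    (Γ : Matrix (Fin d) (Fin d) ℝ) (hΓ : Γ.PosDef)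
    (θ θhat : Fin d → ℝ)
    (hest : Real.sqrt ((θhat - θ) ⬝ᵥ Γ.mulVec (θhat - θ)) ≤ γ)
    (za zb : Fin d → ℝ)
    (helim : γ * Real.sqrt ((za - zb) ⬝ᵥ Γ⁻¹.mulVec (za - zb)) < θhat ⬝ᵥ (za - zb)) :
    0 ≤ θ ⬝ᵥ (za - zb) := by
  have h := hΓ.dotProduct_le_sqrt_mul_sqrt (θhat - θ) (za - zb)
  have hmul := mul_le_mul_of_nonneg_right hest (Real.sqrt_nonneg ((za - zb) ⬝ᵥ Γ⁻¹ *ᵥ (za - zb)))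
  rw [sub_dotProduct] at h
  linarith
end

section
/- Let Γ be a d×d positive definite matrix, θ, θ̂ ∈ ℝ^d with ‖θ̂ − θ‖_Γ ≤ γ for some γ ≥ 0, and let z_a, z_b ∈ ℝ^d with neither action eliminated, i.e. ⟨θ̂, z_a − z_b⟩ ≤ γ·‖z_a − z_b‖_{Γ⁻¹} and ⟨θ̂, z_b − z_a⟩ ≤ γ·‖z_a − z_b‖_{Γ⁻¹}. Let μ := (z_a + z_b)/2 and let π be the uniform distribution on {z_a, z_b}. Then ⟨θ, z_a − μ⟩ ≤ γ·‖z_a − z_b‖_{Γ⁻¹} ≤ 2γ·√(tr(Γ⁻¹ · Cov_{z∼π}(z))), where Cov_{z∼π}(z) = (z_a − μ)(z_a − μ)ᵀ/2 + (z_b − μ)(z_b − μ)ᵀ/2. -/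
open Matrix

/-- Cauchy–Schwarz for the bilinear form of a real positive semidefinite matrix. -/
theorem Matrix.PosSemidef.dotProduct_mulVec_sq_le {n : Type*} [Fintype n]
    {M : Matrix n n ℝ} (hM : M.PosSemidef) (x y : n → ℝ) :
    (x ⬝ᵥ M *ᵥ y) ^ 2 ≤ (x ⬝ᵥ M *ᵥ x) * (y ⬝ᵥ M *ᵥ y) := by
  have hsymm : y ⬝ᵥ M *ᵥ x = x ⬝ᵥ M *ᵥ y := by
    have hT : Mᵀ = M := by simpa using hM.isHermitian.eq
    rw [dotProduct_mulVec, ← mulVec_transpose, hT, dotProduct_comm]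
  have hquad : ∀ t : ℝ, 0 ≤ (y ⬝ᵥ M *ᵥ y) * (t * t) + (2 * (x ⬝ᵥ M *ᵥ y)) * t
      + x ⬝ᵥ M *ᵥ x := fun t => by
    have h := hM.dotProduct_mulVec_nonneg (x + t • y)
    simp only [star_trivial, mulVec_add, mulVec_smul, dotProduct_add, add_dotProduct,
      smul_dotProduct, dotProduct_smul, smul_eq_mul, hsymm] at h
    linarith
  have hdiscrim := discrim_le_zero hquad
  rw [discrim] at hdiscrim
  linarith

/-- The Mahalanobis norms of a positive definite matrix and of its inverse are dual. -/
theorem Matrix.PosDef.dotProduct_le_sqrt_mul_sqrt_inv {n : Type*} [Fintype n] [DecidableEq n]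
    {M : Matrix n n ℝ} (hM : M.PosDef) (x y : n → ℝ) :
    x ⬝ᵥ y ≤ √(x ⬝ᵥ M *ᵥ x) * √(y ⬝ᵥ M⁻¹ *ᵥ y) := by
  have hy : M *ᵥ (M⁻¹ *ᵥ y) = y := by
    rw [mulVec_mulVec, mul_nonsing_inv _ ((isUnit_iff_isUnit_det M).mp hM.isUnit), one_mulVec]
  have h := hM.posSemidef.dotProduct_mulVec_sq_le x (M⁻¹ *ᵥ y)
  rw [hy, dotProduct_comm (M⁻¹ *ᵥ y)] at h
  have hx : 0 ≤ x ⬝ᵥ M *ᵥ x := by simpa using hM.posSemidef.dotProduct_mulVec_nonneg x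
  rw [← Real.sqrt_mul hx]
  exact Real.le_sqrt_of_sq_le h

/-- **Instantaneous regret bound for the uniform distribution over two surviving actions.**
Let `Γ ≻ 0`, `‖θ̂ − θ‖_Γ ≤ γ`, `γ ≥ 0`, and suppose neither of the two actions with features
`z_a, z_b` eliminates the other.  With `μ := (z_a + z_b)/2` and `π` uniform on `{z_a, z_b}`,
`⟨θ, z_a − μ⟩ ≤ γ‖z_a − z_b‖_{Γ⁻¹} ≤ 2γ √(tr(Γ⁻¹ Cov_{z∼π}(z)))`, where
`Cov_{z∼π}(z) = (z_a−μ)(z_a−μ)ᵀ/2 + (z_b−μ)(z_b−μ)ᵀ/2`. -/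
theorem stmt_16 {d : ℕ} (γ : ℝ) (hγ : 0 ≤ γ)
    (Γ : Matrix (Fin d) (Fin d) ℝ) (hΓ : Γ.PosDef)
    (θ θhat : Fin d → ℝ)
    (hest : Real.sqrt ((θhat - θ) ⬝ᵥ Γ.mulVec (θhat - θ)) ≤ γ)
    (za zb : Fin d → ℝ)
    (hab : θhat ⬝ᵥ (za - zb) ≤ γ * Real.sqrt ((za - zb) ⬝ᵥ Γ⁻¹.mulVec (za - zb)))
    (hba : θhat ⬝ᵥ (zb - za) ≤ γ * Real.sqrt ((za - zb) ⬝ᵥ Γ⁻¹.mulVec (za - zb))) :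
    θ ⬝ᵥ (za - (2:ℝ)⁻¹ • (za + zb)) ≤
        γ * Real.sqrt ((za - zb) ⬝ᵥ Γ⁻¹.mulVec (za - zb)) ∧
      γ * Real.sqrt ((za - zb) ⬝ᵥ Γ⁻¹.mulVec (za - zb)) ≤
        2 * γ * Real.sqrt ((Γ⁻¹ *
          ((2:ℝ)⁻¹ • vecMulVec (za - (2:ℝ)⁻¹ • (za + zb)) (za - (2:ℝ)⁻¹ • (za + zb)) +
           (2:ℝ)⁻¹ • vecMulVec (zb - (2:ℝ)⁻¹ • (za + zb)) (zb - (2:ℝ)⁻¹ • (za + zb)))).trace) := by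
  have hmid_a : za - (2:ℝ)⁻¹ • (za + zb) = (2:ℝ)⁻¹ • (za - zb) := by module
  have hmid_b : zb - (2:ℝ)⁻¹ • (za + zb) = -((2:ℝ)⁻¹ • (za - zb)) := by module
  rw [hmid_a, hmid_b]
  set w := za - zb
  constructor
  · have hdual := hΓ.dotProduct_le_sqrt_mul_sqrt_inv (θhat - θ) (-w)
    simp only [mulVec_neg, dotProduct_neg, neg_dotProduct, neg_neg] at hdual
    have hbound := mul_le_mul_of_nonneg_right hest (Real.sqrt_nonneg (w ⬝ᵥ Γ⁻¹ *ᵥ w))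
    have hsub := sub_dotProduct θhat θ w
    rw [dotProduct_smul, smul_eq_mul]
    linarith
  · have htrace : (Γ⁻¹ * ((2:ℝ)⁻¹ • vecMulVec ((2:ℝ)⁻¹ • w) ((2:ℝ)⁻¹ • w) +
        (2:ℝ)⁻¹ • vecMulVec (-((2:ℝ)⁻¹ • w)) (-((2:ℝ)⁻¹ • w)))).trace =
        (2⁻¹) ^ 2 * (w ⬝ᵥ Γ⁻¹ *ᵥ w) := by
      simp only [vecMulVec_neg, neg_vecMulVec, neg_neg, ← add_smul, mul_smul_comm, trace_smul,
        mul_vecMulVec, trace_vecMulVec, mulVec_smul, smul_dotProduct, dotProduct_smul, smul_eq_mul]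
      rw [dotProduct_comm]
      ring
    rw [htrace, Real.sqrt_mul (by positivity), Real.sqrt_sq (by norm_num)]
    apply le_of_eq
    ring
end
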